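/- For all z_1, z_2 ∈ ℂ and generic tuples ū (length n), v̄ (length m): Σ_{v̄ ⇒ {v̄_I, v̄_II}} z_1^{#v̄_II}·K^{(z_2)}_{n,#v̄_I}(ū | v̄_I)·f(v̄_I, v̄_II) = K^{(z_2 − z_1)}_{n,m}(ū | v̄), and Σ_{v̄ ⇒ {v̄_I, v̄_II}} z_1^{#v̄_II}·\bar{K}^{(z_2)}_{n,#v̄_I}(ū | v̄_I)·f(v̄_II, v̄_I) = \bar{K}^{(z_2 − z_1)}_{n,m}(ū | v̄), where the sums run over all partitions of v̄ into two disjoint subtuples with no restriction on cardinalities. -/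

import Mathlib

open scoped BigOperators

noncomputable section

/-- The rational function `g(u,v) = c/(u-v)`. -/
def gC (c u v : ℂ) : ℂ := c / (u - v)

/-- The rational function `f(u,v) = (u-v+c)/(u-v)`. -/
def fC (c u v : ℂ) : ℂ := (u - v + c) / (u - v)

/-- The rational function `h(u,v) = (u-v+c)/c`. -/
def hC (c u v : ℂ) : ℂ := (u - v + c) / c

/-- A family of parameters is generic if all pairwise differences avoid `0, ±c, ±2c`. -/
def Generic (c : ℂ) {ι : Type*} (w : ι → ℂ) : Prop :=
  ∀ i j, i ≠ j → w i - w j ≠ 0 ∧ w i - w j ≠ c ∧ w i - w j ≠ -c ∧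
    w i - w j ≠ 2 * c ∧ w i - w j ≠ -2 * c

/-- The modified Izergin determinant `K^{(z)}(x̄|ȳ)`. -/
def KIz (c z : ℂ) {ι κ : Type*} [Fintype ι] [Fintype κ] [DecidableEq κ]
    (x : ι → ℂ) (y : κ → ℂ) : ℂ :=
  Matrix.det (Matrix.of fun j k : κ =>
    -z * (if j = k then 1 else 0) +
      (∏ i, fC c (x i) (y j)) * (∏ i ∈ Finset.univ.erase j, fC c (y j) (y i))
        / hC c (y j) (y k))

/-- The conjugated modified Izergin determinant: `c` is replaced by `-c`. -/
def KIzBar (c z : ℂ) {ι κ : Type*} [Fintype ι] [Fintype κ] [DecidableEq κ]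
    (x : ι → ℂ) (y : κ → ℂ) : ℂ :=
  KIz (-c) z x y

/-- Restriction of a tuple to a subtuple indexed by a `Finset`. -/
def restr {p : ℕ} (w : Fin p → ℂ) (s : Finset (Fin p)) : {x // x ∈ s} → ℂ :=
  fun i => w i.1

/-- Double product `f(w̄_s, w̄_t)` over two subtuples of a tuple. -/
def fSS (c : ℂ) {p : ℕ} (w : Fin p → ℂ) (s t : Finset (Fin p)) : ℂ :=
  ∏ i ∈ s, ∏ j ∈ t, fC c (w i) (w j)

/-!
Write `N` for the matrix with entries `f(y_j, ȳ_j) / h(y_j, y_k)`. Conjugation by a diagonal matrix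
turns `N` into the matrix of the shift `p(X) ↦ p(X + c)` on polynomials of degree less than `#ȳ`,
in the Lagrange basis at the nodes `ȳ`. The shift is unipotent, so `det (a N + b) = (a + b) ^ #ȳ`.
In particular `det N = 1`, every principal minor of `N` is a product `f(ȳ_I, ȳ_II)`, and the
principal minor expansion of the modified Izergin determinant is

  `K^{(z)}(x̄ | ȳ) = ∑ (-z) ^ #ȳ_II * f(x̄, ȳ_I) * f(ȳ_I, ȳ_II)`.

Expanding `det (a N + b)` in the same way gives
`∑ a ^ #ȳ_I * b ^ #ȳ_II * f(ȳ_I, ȳ_II) = (a + b) ^ #ȳ`. Both sides of the summation formula are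
thus sums over subtuples `v̄_I` carrying the factor `f(ū, v̄_I)`, and this last identity, applied to
the complement of `v̄_I` with `a = -z_2` and `b = z_1`, shows that they agree term by term. The
conjugated formula is the same identity for `-c`, because `f` with `c` replaced by `-c` is `f` with
its arguments exchanged.
-/

open Finset
open Function (Injective Embedding comp_apply)

section ShiftMatrix

open Polynomial

variable {F κ : Type*} [Field F]

/-- The matrix of the shift `p(X) ↦ p(X + c)` on polynomials of degree less than `#κ`, each
polynomial being encoded by its values at the nodes `y`. It serves as a unipotent model of the
Izergin kernel. -/
def shiftMatrix [Fintype κ] [DecidableEq κ] (c : F) (y : κ → F) : Matrix κ κ F :=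
  Matrix.of fun j k => (Lagrange.basis univ y k).eval (y j + c)

lemma shiftMatrix_apply [Fintype κ] [DecidableEq κ] (c : F) (y : κ → F) (j k : κ) :
    shiftMatrix c y j k =
      Lagrange.nodalWeight univ y k * ∏ i ∈ univ.erase k, (y j - y i + c) := by
  simp only [shiftMatrix, Matrix.of_apply, Lagrange.basis, eval_prod, Lagrange.basisDivisor,
    eval_mul, eval_C, eval_sub, eval_X, prod_mul_distrib, Lagrange.nodalWeight,
    add_sub_right_comm]

lemma shiftMatrix_comp_equiv {κ' : Type*} [Fintype κ] [DecidableEq κ] [Fintype κ']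
    [DecidableEq κ'] (c : F) (y : κ → F) (e : κ' ≃ κ) :
    shiftMatrix c (y ∘ e) = (shiftMatrix c y).submatrix e e := by
  ext j k
  simp only [Matrix.submatrix_apply, shiftMatrix_apply, Lagrange.nodalWeight, comp_apply,
    ← prod_mul_distrib]
  exact prod_equiv e (by simp) (by simp)

lemma shiftMatrix_mul_vandermonde {n : ℕ} (c : F) {y : Fin n → F} (hy : Injective y) :
    shiftMatrix c y * Matrix.vandermonde y =
      Matrix.of fun i j : Fin n => ((X + C c) ^ (j : ℕ)).eval (y i) := by
  ext i j
  have hdeg : (X ^ (j : ℕ) : F[X]).degree < #(univ : Finset (Fin n)) := by simp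
  have h := congrArg (eval (y i + c)) (Lagrange.eq_interpolate hy.injOn hdeg)
  simp only [Lagrange.interpolate_apply, eval_finsetSum, eval_mul, eval_C, eval_pow, eval_X] at h
  simp only [Matrix.mul_apply, shiftMatrix, Matrix.of_apply, Matrix.vandermonde_apply, eval_pow,
    eval_add, eval_X, eval_C, h, mul_comm]

lemma det_smul_shiftMatrix_add_smul_one_fin {n : ℕ} (c : F) {y : Fin n → F} (hy : Injective y)
    (a b : F) : (a • shiftMatrix c y + b • 1).det = (a + b) ^ n := by
  let p : Fin n → F[X] := fun j => C a * (X + C c) ^ (j : ℕ) + C b * X ^ (j : ℕ)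
  have hdeg (j : Fin n) : (p j).natDegree ≤ j := by
    simp only [p]
    compute_degree
  have hcoeff (j : Fin n) : (p j).coeff j = a + b := by
    simp [p, coeff_X_add_C_pow]
  have hmul : (a • shiftMatrix c y + b • 1) * Matrix.vandermonde y =
      Matrix.vandermonde y * Matrix.of fun i j : Fin n => (p j).coeff i := by
    rw [← Matrix.eval_matrixOfPolynomials_eq_vandermonde_mul_matrixOfPolynomials y p hdeg,
      add_mul, smul_mul_assoc, smul_mul_assoc, one_mul, shiftMatrix_mul_vandermonde c hy]
    ext i j
    simp [p]
  have hdet := congrArg Matrix.det hmul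
  rw [Matrix.det_mul, Matrix.det_mul, mul_comm (Matrix.det (Matrix.vandermonde y)),
    Matrix.det_of_isUpperTriangular (Matrix.matrixOfPolynomials_blockTriangular p hdeg)] at hdet
  simpa [hcoeff] using
    mul_right_cancel₀ (Matrix.det_vandermonde_ne_zero_iff.mpr hy) hdet

theorem det_smul_shiftMatrix_add_smul_one [Fintype κ] [DecidableEq κ] (c : F) {y : κ → F}
    (hy : Injective y) (a b : F) :
    (a • shiftMatrix c y + b • 1).det = (a + b) ^ Fintype.card κ := by
  let e := (Fintype.equivFin κ).symm
  rw [← det_smul_shiftMatrix_add_smul_one_fin c (hy.comp e.injective), shiftMatrix_comp_equiv,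
    ← Matrix.det_submatrix_equiv_self e, ← Matrix.submatrix_one_equiv e]
  rfl

end ShiftMatrix

theorem det_add_smul_one_eq_sum_det_submatrix {R κ : Type*} [CommRing R] [Fintype κ]
    [DecidableEq κ] (M : Matrix κ κ R) (z : R) :
    (M + z • (1 : Matrix κ κ R)).det =
      ∑ s : Finset κ, z ^ #sᶜ * (M.submatrix (↑) (↑) : Matrix s s R).det := by
  let D : (κ → R) [⋀^κ]→ₗ[R] R := Matrix.detRowAlternating
  have hrow (s : Finset κ) : (s.piecewise M (z • 1 : Matrix κ κ R) : κ → κ → R) =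
      fun i => (if i ∈ sᶜ then z else 1) • s.piecewise M.row (1 : Matrix κ κ R).row i := by
    funext i j
    by_cases hi : i ∈ s <;> simp [hi, Finset.piecewise, Matrix.row]
  calc (M + z • (1 : Matrix κ κ R)).det
      = ∑ s : Finset κ, D (s.piecewise M (z • 1 : Matrix κ κ R)) :=
        D.map_add_univ M (z • (1 : Matrix κ κ R))
    _ = ∑ s : Finset κ, z ^ #sᶜ * (M.submatrix (↑) (↑) : Matrix s s R).det := by
      refine sum_congr rfl fun s _ => ?_
      rw [hrow, D.map_smul_univ, prod_ite_mem, univ_inter, prod_const, smul_eq_mul,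
        ← Matrix.det_piecewise_one_eq_submatrix_det]
      rfl

section Subsets

variable {κ M : Type*} [DecidableEq κ]

lemma sum_finset_subtype_eq_sum_powerset [AddCommMonoid M] (s : Finset κ)
    (F : Finset κ → Finset κ → M) :
    ∑ t : Finset s, F (t.map (Embedding.subtype _)) (tᶜ.map (Embedding.subtype _)) =
      ∑ t ∈ s.powerset, F t (s \ t) := by
  refine sum_nbij' (fun t => t.map (Embedding.subtype _)) (fun t => t.subtype (· ∈ s))
    (fun t _ => ?_) (fun _ _ => mem_univ _) (fun t _ => ?_) (fun t ht => ?_) (fun t _ => ?_)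
  · exact mem_powerset.mpr (map_subtype_subset t)
  · ext a
    simp
  · exact subtype_map_of_mem fun a ha => mem_powerset.mp ht ha
  · rw [compl_eq_univ_sdiff, Finset.map_sdiff, univ_eq_attach, attach_map_val]

lemma compl_sdiff_sdiff_of_le {α : Type*} [BooleanAlgebra α] {s t : α} (h : t ≤ s) :
    tᶜ \ (s \ t) = sᶜ := by
  rw [sdiff_eq, ← compl_sup, sup_sdiff_cancel_right h]

lemma sum_sum_powerset_eq_sum_sum_powerset_compl [Fintype κ] [AddCommMonoid M]
    (F : Finset κ → Finset κ → Finset κ → M) :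
    ∑ s : Finset κ, ∑ t ∈ s.powerset, F t (s \ t) sᶜ =
      ∑ t : Finset κ, ∑ r ∈ tᶜ.powerset, F t r (tᶜ \ r) := by
  rw [sum_sigma', sum_sigma']
  refine sum_nbij' (fun p => ⟨p.2, p.1 \ p.2⟩) (fun p => ⟨p.1 ∪ p.2, p.1⟩) ?_ ?_ ?_ ?_ ?_ <;>
    rintro ⟨s, t⟩ h <;> simp only [mem_sigma, mem_univ, mem_powerset, true_and] at h ⊢
  · exact disjoint_sdiff_self_left.le_compl_right
  · exact subset_union_left
  · rw [union_sdiff_of_subset h]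
  · rw [union_sdiff_cancel_left (le_compl_iff_disjoint_left.mp h)]
  · rw [compl_sdiff_sdiff_of_le h]

lemma prod_univ_erase_coe {N : Type*} [Fintype κ] [CommMonoid N] (s : Finset κ) (j : s)
    (g : κ → N) :
    ∏ i ∈ univ.erase (j : κ), g i = (∏ i ∈ sᶜ, g i) * ∏ i ∈ univ.erase j, g (i : s) := by
  have hsdiff : univ.erase (j : κ) \ s.erase j = sᶜ := by
    ext i
    grind [mem_compl]
  have hmap : (univ.erase j).map (Embedding.subtype (· ∈ s)) = s.erase j := by
    rw [map_erase, univ_eq_attach, attach_map_val, Embedding.subtype_apply]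
  rw [← prod_sdiff (erase_subset_erase _ (subset_univ s)), hsdiff, ← hmap, prod_map]
  rfl

end Subsets

section WeightedIzergin

variable {κ : Type*} [DecidableEq κ]

section Fintype

variable [Fintype κ]

/-- The matrix `f(y_j, ȳ_j) / h(y_j, y_k)` underlying the modified Izergin determinant. -/
def izerginKernel (c : ℂ) (y : κ → ℂ) : Matrix κ κ ℂ :=
  Matrix.of fun j k => (∏ i ∈ univ.erase j, fC c (y j) (y i)) / hC c (y j) (y k)

/-- The modified Izergin determinant with the factors `f(x̄, y_j)` replaced by arbitrary
weights `w j`, the only way in which it depends on `x̄`. -/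
def weightedIzergin (c z : ℂ) (w y : κ → ℂ) : ℂ :=
  (Matrix.diagonal w * izerginKernel c y + (-z) • 1).det

lemma KIz_eq_weightedIzergin (c z : ℂ) {ι : Type*} [Fintype ι] (x : ι → ℂ) (y : κ → ℂ) :
    KIz c z x y = weightedIzergin c z (fun j => ∏ i, fC c (x i) (y j)) y := by
  unfold KIz weightedIzergin
  congr 1
  ext j k
  simp only [Matrix.of_apply, Matrix.add_apply, Matrix.diagonal_mul, izerginKernel,
    Matrix.smul_apply, Matrix.one_apply, smul_eq_mul, mul_div_assoc, add_comm]

lemma izerginKernel_apply {c : ℂ} {y : κ → ℂ} (hyc : ∀ i j, y i - y j ≠ c) (j k : κ) :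
    izerginKernel c y j k =
      Lagrange.nodalWeight univ y j * ∏ i ∈ univ.erase k, (y j - y i + c) := by
  have hjk : y j - y k + c ≠ 0 := fun h => hyc k j (by linear_combination -h)
  have hmove : c * ∏ i ∈ univ.erase j, (y j - y i + c) =
      (y j - y k + c) * ∏ i ∈ univ.erase k, (y j - y i + c) := by
    rw [mul_prod_erase univ (fun i => y j - y i + c) (mem_univ k),
      ← mul_prod_erase univ (fun i => y j - y i + c) (mem_univ j), sub_self, zero_add]
  simp only [izerginKernel, Matrix.of_apply, fC, hC, prod_div_distrib, Lagrange.nodalWeight,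
    prod_inv_distrib]
  rw [div_div_eq_mul_div, div_eq_iff hjk]
  linear_combination (∏ i ∈ univ.erase j, (y j - y i))⁻¹ * hmove

lemma izerginKernel_mul_diagonal_nodalWeight {c : ℂ} {y : κ → ℂ} (hyc : ∀ i j, y i - y j ≠ c) :
    izerginKernel c y * Matrix.diagonal (Lagrange.nodalWeight univ y) =
      Matrix.diagonal (Lagrange.nodalWeight univ y) * shiftMatrix c y := by
  ext j k
  rw [Matrix.mul_diagonal, Matrix.diagonal_mul, shiftMatrix_apply, izerginKernel_apply hyc,
    mul_assoc, mul_comm (Lagrange.nodalWeight univ y k)]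

theorem det_smul_izerginKernel_add_smul_one {c : ℂ} {y : κ → ℂ} (hy : Injective y)
    (hyc : ∀ i j, y i - y j ≠ c) (a b : ℂ) :
    (a • izerginKernel c y + b • 1).det = (a + b) ^ Fintype.card κ := by
  let D := Matrix.diagonal (Lagrange.nodalWeight univ y)
  have hD : D.det ≠ 0 := by
    rw [Matrix.det_diagonal]
    exact prod_ne_zero_iff.mpr fun j hj => Lagrange.nodalWeight_ne_zero hy.injOn hj
  have hconj : (a • izerginKernel c y + b • 1) * D = D * (a • shiftMatrix c y + b • 1) := by
    simp only [D, mul_add, add_mul, mul_smul_comm, smul_mul_assoc, mul_one, one_mul,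
      izerginKernel_mul_diagonal_nodalWeight hyc]
  apply mul_right_cancel₀ hD
  rw [← Matrix.det_mul, hconj, Matrix.det_mul, det_smul_shiftMatrix_add_smul_one c hy, mul_comm]

lemma izerginKernel_submatrix (c : ℂ) (y : κ → ℂ) (s : Finset κ) :
    (izerginKernel c y).submatrix (↑) (↑) =
      Matrix.diagonal (fun j : s => ∏ i ∈ sᶜ, fC c (y j) (y i)) *
        izerginKernel c (fun j : s => y j) := by
  ext j k
  simp only [Matrix.submatrix_apply, izerginKernel, Matrix.diagonal_mul, Matrix.of_apply,
    prod_univ_erase_coe s j, mul_div_assoc]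

lemma det_izerginKernel_submatrix {c : ℂ} {y : κ → ℂ} (hy : Injective y)
    (hyc : ∀ i j, y i - y j ≠ c) (s : Finset κ) :
    ((izerginKernel c y).submatrix (↑) (↑) : Matrix s s ℂ).det =
      ∏ i ∈ s, ∏ j ∈ sᶜ, fC c (y i) (y j) := by
  have hdet : (izerginKernel c (fun j : s => y j)).det = 1 := by
    have hys : Injective fun j : s => y j := hy.comp Subtype.val_injective
    simpa using det_smul_izerginKernel_add_smul_one hys (fun i j => hyc i j) 1 0
  rw [izerginKernel_submatrix, Matrix.det_mul, hdet, mul_one, Matrix.det_diagonal,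
    prod_coe_sort s fun i => ∏ j ∈ sᶜ, fC c (y i) (y j)]

theorem weightedIzergin_eq_sum {c : ℂ} {y : κ → ℂ} (hy : Injective y)
    (hyc : ∀ i j, y i - y j ≠ c) (z : ℂ) (w : κ → ℂ) :
    weightedIzergin c z w y =
      ∑ s : Finset κ, (-z) ^ #sᶜ * (∏ i ∈ s, w i) * ∏ i ∈ s, ∏ j ∈ sᶜ, fC c (y i) (y j) := by
  rw [weightedIzergin, det_add_smul_one_eq_sum_det_submatrix]
  refine sum_congr rfl fun s _ => ?_
  have hminor : ((Matrix.diagonal w * izerginKernel c y).submatrix (↑) (↑) : Matrix s s ℂ) =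
      Matrix.diagonal (fun j : s => w j) * (izerginKernel c y).submatrix (↑) (↑) := by
    ext j k
    simp only [Matrix.submatrix_apply, Matrix.diagonal_mul]
  rw [hminor, Matrix.det_mul, Matrix.det_diagonal, prod_coe_sort s w,
    det_izerginKernel_submatrix hy hyc, mul_assoc]

end Fintype

lemma weightedIzergin_subtype_eq_sum {c : ℂ} {y : κ → ℂ} (hy : Injective y)
    (hyc : ∀ i j, y i - y j ≠ c) (z : ℂ) (w : κ → ℂ) (s : Finset κ) :
    weightedIzergin c z (fun j : s => w j) (fun j : s => y j) =
      ∑ t ∈ s.powerset,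
        (-z) ^ #(s \ t) * (∏ i ∈ t, w i) * ∏ i ∈ t, ∏ j ∈ s \ t, fC c (y i) (y j) := by
  have hys : Injective fun j : s => y j := hy.comp Subtype.val_injective
  rw [weightedIzergin_eq_sum hys fun i j => hyc i j,
    ← sum_finset_subtype_eq_sum_powerset s fun t r =>
      (-z) ^ #r * (∏ i ∈ t, w i) * ∏ i ∈ t, ∏ j ∈ r, fC c (y i) (y j)]
  simp only [card_map, prod_map, Embedding.subtype_apply]

theorem sum_powerset_pow_mul_prod_fC {c : ℂ} {y : κ → ℂ} (hy : Injective y)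
    (hyc : ∀ i j, y i - y j ≠ c) (a b : ℂ) (s : Finset κ) :
    ∑ t ∈ s.powerset, b ^ #(s \ t) * a ^ #t * ∏ i ∈ t, ∏ j ∈ s \ t, fC c (y i) (y j) =
      (a + b) ^ #s := by
  have hys : Injective fun j : s => y j := hy.comp Subtype.val_injective
  rw [← Fintype.card_coe s,
    ← det_smul_izerginKernel_add_smul_one hys fun i j => hyc i j, Matrix.smul_eq_diagonal_mul]
  simpa only [weightedIzergin, neg_neg, prod_const] using
    (weightedIzergin_subtype_eq_sum hy hyc (-b) (fun _ => a) s).symm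

theorem sum_weightedIzergin_mul_prod_fC [Fintype κ] {c : ℂ} {y : κ → ℂ} (hy : Injective y)
    (hyc : ∀ i j, y i - y j ≠ c) (z₁ z₂ : ℂ) (w : κ → ℂ) :
    ∑ s : Finset κ, z₁ ^ #sᶜ * weightedIzergin c z₂ (fun j : s => w j) (fun j : s => y j) *
        ∏ i ∈ s, ∏ j ∈ sᶜ, fC c (y i) (y j) =
      weightedIzergin c (z₂ - z₁) w y := by
  let f (s t : Finset κ) : ℂ := ∏ i ∈ s, ∏ j ∈ t, fC c (y i) (y j)
  have hf_left {s t q : Finset κ} (h : t ⊆ s) : f s q = f t q * f (s \ t) q :=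
    (prod_sdiff h).symm.trans (mul_comm _ _)
  have hf_right {s t q : Finset κ} (h : t ⊆ s) : f q s = f q t * f q (s \ t) := by
    simp only [f, ← prod_mul_distrib]
    exact prod_congr rfl fun i _ => (prod_sdiff h).symm.trans (mul_comm _ _)
  have hterm (s t : Finset κ) (h : t ⊆ s) : f t (s \ t) * f s sᶜ = f t tᶜ * f (s \ t) sᶜ := by
    have hsub : s \ t ⊆ tᶜ := disjoint_sdiff_self_left.le_compl_right
    rw [hf_left h, hf_right hsub, compl_sdiff_sdiff_of_le h]
    ring
  calc
    _ = ∑ s : Finset κ, ∑ t ∈ s.powerset, (∏ i ∈ t, w i) * f t tᶜ *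
          (z₁ ^ #sᶜ * (-z₂) ^ #(s \ t) * f (s \ t) sᶜ) := by
      refine sum_congr rfl fun s _ => ?_
      rw [weightedIzergin_subtype_eq_sum hy hyc, mul_sum, sum_mul]
      refine sum_congr rfl fun t ht => ?_
      linear_combination z₁ ^ #sᶜ * (-z₂) ^ #(s \ t) * (∏ i ∈ t, w i) *
        hterm s t (mem_powerset.mp ht)
    _ = ∑ t : Finset κ, ∑ r ∈ tᶜ.powerset, (∏ i ∈ t, w i) * f t tᶜ *
          (z₁ ^ #(tᶜ \ r) * (-z₂) ^ #r * f r (tᶜ \ r)) :=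
      sum_sum_powerset_eq_sum_sum_powerset_compl fun t r q =>
        (∏ i ∈ t, w i) * f t tᶜ * (z₁ ^ #q * (-z₂) ^ #r * f r q)
    _ = ∑ t : Finset κ, (∏ i ∈ t, w i) * f t tᶜ * (-z₂ + z₁) ^ #tᶜ := by
      simp only [← mul_sum, f, sum_powerset_pow_mul_prod_fC hy hyc]
    _ = weightedIzergin c (z₂ - z₁) w y := by
      rw [weightedIzergin_eq_sum hy hyc]
      refine sum_congr rfl fun t _ => ?_
      rw [neg_sub, sub_eq_neg_add]
      ring

lemma fC_neg (c u v : ℂ) : fC (-c) u v = fC c v u := by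
  rw [fC, fC, ← neg_div_neg_eq]
  congr 1 <;> ring

theorem stmt18_general [Fintype κ] {c : ℂ} {y : κ → ℂ} (hy : Injective y)
    (hyc : ∀ i j, y i - y j ≠ c) (z₁ z₂ : ℂ) (w : κ → ℂ) :
    ∑ s : Finset κ, z₁ ^ #sᶜ * weightedIzergin c z₂ (fun j : s => w j) (fun j : s => y j) *
        ∏ i ∈ s, ∏ j ∈ sᶜ, fC c (y i) (y j) =
      weightedIzergin c (z₂ - z₁) w y ∧
    ∑ s : Finset κ, z₁ ^ #sᶜ * weightedIzergin (-c) z₂ (fun j : s => w j) (fun j : s => y j) *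
        ∏ i ∈ sᶜ, ∏ j ∈ s, fC c (y i) (y j) =
      weightedIzergin (-c) (z₂ - z₁) w y := by
  refine ⟨sum_weightedIzergin_mul_prod_fC hy hyc z₁ z₂ w, ?_⟩
  have hyc' (i j : κ) : y i - y j ≠ -c := fun h => hyc j i (by linear_combination -h)
  simp only [← sum_weightedIzergin_mul_prod_fC hy hyc' z₁ z₂ w, fC_neg]
  exact sum_congr rfl fun s _ => by rw [prod_comm]

end WeightedIzergin

section Generic

variable {c : ℂ} {ι κ : Type*} {w : ι → ℂ}

lemma Generic.comp (hw : Generic c w) {e : κ → ι} (he : Injective e) : Generic c (w ∘ e) :=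
  fun _ _ hij => hw _ _ (he.ne hij)

lemma Generic.injective (hw : Generic c w) : Injective w := fun i j hij => by
  by_contra hne
  exact (hw i j hne).1 (sub_eq_zero.mpr hij)

lemma Generic.sub_ne (hw : Generic c w) (hc : c ≠ 0) (i j : ι) : w i - w j ≠ c := by
  rcases eq_or_ne i j with rfl | hij
  · rw [sub_self]
    exact hc.symm
  · exact (hw i j hij).2.1

lemma Generic.of_append_right {n m : ℕ} {u : Fin n → ℂ} {v : Fin m → ℂ}
    (h : Generic c (Fin.append u v)) : Generic c v := by
  simpa [Function.comp_def] using h.comp (Fin.natAdd_injective m n)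

end Generic

/-- Summation formula shifting the parameter of the modified Izergin determinant
(Proposition `SUM-Kf` of the paper). -/
theorem stmt18
    (c : ℂ) (hc : c ≠ 0) (z1 z2 : ℂ) (n m : ℕ)
    (u : Fin n → ℂ) (v : Fin m → ℂ)
    (hgen : Generic c (Fin.append u v)) :
    (∑ s : Finset (Fin m),
        z1 ^ sᶜ.card * KIz c z2 u (restr v s) *
          (∏ i ∈ s, ∏ j ∈ sᶜ, fC c (v i) (v j)))
        = KIz c (z2 - z1) u v ∧
      (∑ s : Finset (Fin m),
        z1 ^ sᶜ.card * KIzBar c z2 u (restr v s) *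
          (∏ i ∈ sᶜ, ∏ j ∈ s, fC c (v i) (v j)))
        = KIzBar c (z2 - z1) u v := by
  simp only [KIzBar, KIz_eq_weightedIzergin, restr]
  have hv := hgen.of_append_right
  exact ⟨(stmt18_general hv.injective (hv.sub_ne hc) z1 z2 fun j => ∏ i, fC c (u i) (v j)).1,
    (stmt18_general hv.injective (hv.sub_ne hc) z1 z2 fun j => ∏ i, fC (-c) (u i) (v j)).2⟩
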